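/- Let p, q, r, s be positive real numbers and let t be a real number with t < q + s. Then ∫₀¹∫₀¹ x^{p-1}(1-x)^{q-1} y^{r-1}(1-y)^{s-1} (1-xy)^{-t} dx dy = [Γ(p)Γ(q)/Γ(p+q)] · [Γ(r)Γ(s)/Γ(r+s)] · ₃F₂(t, p, r; p+q, r+s; 1). -/

import Mathlib

open Real MeasureTheory

/-- Pochhammer symbol `(a)_k = a (a+1) ⋯ (a+k-1)` for real `a`. -/
noncomputable def poch (a : ℝ) (k : ℕ) : ℝ := (ascPochhammer ℝ k).eval a

/-- Gaussian hypergeometric function `₂F₁(a,b;c;z)`. -/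
noncomputable def hyp2F1 (a b c z : ℝ) : ℝ :=
  ∑' k : ℕ, (poch a k * poch b k) / poch c k * z ^ k / (Nat.factorial k)

/-- Generalized hypergeometric function `₃F₂(a₁,a₂,a₃;b₁,b₂;z)`. -/
noncomputable def hyp3F2 (a₁ a₂ a₃ b₁ b₂ z : ℝ) : ℝ :=
  ∑' k : ℕ, (poch a₁ k * poch a₂ k * poch a₃ k) / (poch b₁ k * poch b₂ k) * z ^ k /
    (Nat.factorial k)

/-- Generalized hypergeometric function `₄F₃(a₁,a₂,a₃,a₄;b₁,b₂,b₃;z)`. -/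
noncomputable def hyp4F3 (a₁ a₂ a₃ a₄ b₁ b₂ b₃ z : ℝ) : ℝ :=
  ∑' k : ℕ, (poch a₁ k * poch a₂ k * poch a₃ k * poch a₄ k) /
    (poch b₁ k * poch b₂ k * poch b₃ k) * z ^ k / (Nat.factorial k)

/-!
Euler's integral, applied twice. Integrating the binomial series of `(1 - x * y) ^ (-t)` term by
term against the beta weight in `y` gives `B(r, s) ₂F₁(t, r; r + s; x)`; integrating that power
series against the beta weight in `x` gives the `₃F₂` series at `1`. The exchanges of sum and
integral need only absolute convergence, because the weights are nonnegative. Euler's limit formula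
for `Γ` gives `(a)_k / (b)_k = O(k ^ (a - b))`, so the terms of the `₃F₂` series are
`O(k ^ (t - q - s - 1))`, summable because `t < q + s`.
-/

open Set Filter Asymptotics
open ProbabilityTheory (beta beta_pos beta_eq_betaIntegralReal)

section Pochhammer

lemma poch_zero (a : ℝ) : poch a 0 = 1 := by
  simp only [poch, ascPochhammer_zero, Polynomial.eval_one]

lemma poch_one (k : ℕ) : poch 1 k = k.factorial :=
  ascPochhammer_eval_one ℝ k

lemma poch_succ (a : ℝ) (k : ℕ) : poch a (k + 1) = poch a k * (a + k) :=
  ascPochhammer_succ_eval k a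

lemma poch_eq_prod_range (a : ℝ) (k : ℕ) : poch a k = ∏ j ∈ Finset.range k, (a + j) := by
  induction k with
  | zero => rw [poch_zero, Finset.prod_range_zero]
  | succ k ih => rw [poch_succ, ih, Finset.prod_range_succ]

lemma Gamma_add_natCast_eq_poch_mul {a : ℝ} (ha : ∀ m : ℕ, a ≠ -m) (k : ℕ) :
    Gamma (a + k) = poch a k * Gamma a := by
  induction k with
  | zero => rw [Nat.cast_zero, add_zero, poch_zero, one_mul]
  | succ k ih =>
    have hk : a + k ≠ 0 := fun h => ha k (eq_neg_of_add_eq_zero_left h)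
    rw [Nat.cast_succ, ← add_assoc, Gamma_add_one hk, ih, poch_succ]
    ring

lemma ne_neg_natCast_of_pos {a : ℝ} (ha : 0 < a) (m : ℕ) : a ≠ -m :=
  ((neg_nonpos.2 m.cast_nonneg).trans_lt ha).ne'

lemma beta_add_natCast {a b : ℝ} (ha : ∀ m : ℕ, a ≠ -m) (hab : ∀ m : ℕ, a + b ≠ -m) (k : ℕ) :
    beta (a + k) b = beta a b * (poch a k / poch (a + b) k) := by
  unfold beta
  rw [add_right_comm, Gamma_add_natCast_eq_poch_mul ha, Gamma_add_natCast_eq_poch_mul hab]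
  ring

-- At nonpositive integers this holds in the junk-value convention `x / 0 = 0`.
lemma poch_div_poch_eventuallyEq_GammaSeq (a b : ℝ) :
    (fun n : ℕ => poch a n / poch b n) =ᶠ[atTop]
      fun n => (n : ℝ) ^ (a - b) * (GammaSeq b n / GammaSeq a n * ((b + n) / (a + n))) := by
  have eventually_add_ne_zero (c : ℝ) : ∀ᶠ n : ℕ in atTop, c + n ≠ 0 :=
    (tendsto_atTop_add_const_left _ c tendsto_natCast_atTop_atTop).eventually_ne_atTop 0
  filter_upwards [eventually_add_ne_zero a, eventually_add_ne_zero b, eventually_gt_atTop 0]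
    with n ha hb hn
  have hn_pos : (0 : ℝ) < n := Nat.cast_pos.2 hn
  have hna : (n : ℝ) ^ a ≠ 0 := (rpow_pos_of_pos hn_pos a).ne'
  have hnb : (n : ℝ) ^ b ≠ 0 := (rpow_pos_of_pos hn_pos b).ne'
  rw [GammaSeq, GammaSeq, ← poch_eq_prod_range, ← poch_eq_prod_range, poch_succ, poch_succ,
    rpow_sub hn_pos]
  field_simp

lemma isBigO_poch_div_poch (a b : ℝ) :
    (fun n : ℕ => poch a n / poch b n) =O[atTop] fun n => (n : ℝ) ^ (a - b) := by
  by_cases ha : ∃ m : ℕ, a = -m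
  · obtain ⟨m, rfl⟩ := ha
    refine (isBigO_zero _ _).congr' ?_ EventuallyEq.rfl
    filter_upwards [eventually_gt_atTop m] with n hn
    rw [poch, ascPochhammer_eval_neg_coe_nat_of_lt hn, zero_div]
  · push Not at ha
    have hGamma := (GammaSeq_tendsto_Gamma b).div (GammaSeq_tendsto_Gamma a) (Gamma_ne_zero ha)
    have hshift := tendsto_add_mul_div_add_mul_atTop_nhds b a (1 : ℝ) one_ne_zero
    simp only [one_mul] at hshift
    refine IsBigO.congr' ?_ (poch_div_poch_eventuallyEq_GammaSeq a b).symm EventuallyEq.rfl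
    simpa only [mul_one, Pi.div_apply] using
      (isBigO_refl _ _).mul ((hGamma.mul hshift).isBigO_one ℝ)

end Pochhammer

section Hypergeometric

lemma hasSum_one_sub_rpow_neg (a : ℝ) {z : ℝ} (hz : |z| < 1) :
    HasSum (fun k : ℕ => poch a k / k.factorial * z ^ k) ((1 - z) ^ (-a)) := by
  have hseries := (one_div_one_sub_rpow_hasFPowerSeriesOnBall_zero a).hasSum (y := z)
    (by simpa [enorm_eq_nnnorm, ← NNReal.coe_lt_coe] using hz)
  have hcoeff (k : ℕ) : Ring.choose (a + k - 1) k = poch a k / k.factorial := by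
    rw [eq_div_iff (by positivity), poch, ← Polynomial.ascPochhammer_smeval_eq_eval,
      ← Ring.factorial_nsmul_multichoose_eq_ascPochhammer, Ring.multichoose_eq, nsmul_eq_mul,
      mul_comm]
  simpa only [FormalMultilinearSeries.ofScalars_apply_eq, hcoeff, smul_eq_mul, zero_add, one_div,
    ← rpow_neg (sub_nonneg.2 (abs_lt.1 hz).2.le)] using hseries

lemma isBigO_rpow_mul_rpow (α β : ℝ) :
    (fun n : ℕ => (n : ℝ) ^ α * (n : ℝ) ^ β) =O[atTop] fun n => (n : ℝ) ^ (α + β) := by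
  refine EventuallyEq.isBigO ?_
  filter_upwards [eventually_gt_atTop 0] with n hn
  exact (rpow_add (Nat.cast_pos.2 hn) α β).symm

lemma isBigO_hyp2F1_coeff (a b c : ℝ) :
    (fun n : ℕ => poch a n * poch b n / poch c n / n.factorial) =O[atTop]
      fun n => (n : ℝ) ^ (a + b - c - 1) := by
  have hprod := ((isBigO_poch_div_poch a 1).mul (isBigO_poch_div_poch b c)).trans
    (isBigO_rpow_mul_rpow _ _)
  refine hprod.congr (fun n => ?_) fun n => ?_
  · rw [poch_one]
    ring
  · ring_nf

lemma summable_rpow_mul_pow (α : ℝ) {z : ℝ} (hz : |z| < 1) :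
    Summable fun n : ℕ => (n : ℝ) ^ α * z ^ n := by
  have hα : (fun n : ℕ => (n : ℝ) ^ α) =O[atTop] fun n => (n : ℝ) ^ ⌈α⌉₊ := by
    refine IsBigO.of_norm_eventuallyLE ?_
    filter_upwards [eventually_ge_atTop 1] with n hn
    rw [norm_of_nonneg (by positivity), ← rpow_natCast]
    exact rpow_le_rpow_of_exponent_le (Nat.one_le_cast.2 hn) (Nat.le_ceil α)
  exact summable_of_isBigO_nat (summable_pow_mul_geometric_of_norm_lt_one ⌈α⌉₊ hz)
    (hα.mul (isBigO_refl _ _))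

lemma summable_hyp2F1 (a b c : ℝ) {z : ℝ} (hz : |z| < 1) :
    Summable fun k : ℕ => (poch a k * poch b k) / poch c k * z ^ k / k.factorial := by
  simpa only [div_mul_eq_mul_div, div_right_comm] using
    summable_of_isBigO_nat (summable_rpow_mul_pow _ hz)
      ((isBigO_hyp2F1_coeff a b c).mul (isBigO_refl (fun k => z ^ k) _))

lemma summable_hyp3F2_one {a₁ a₂ a₃ b₁ b₂ : ℝ} (h : a₁ + a₂ + a₃ < b₁ + b₂) :
    Summable fun k : ℕ =>
      (poch a₁ k * poch a₂ k * poch a₃ k) / (poch b₁ k * poch b₂ k) * 1 ^ k / k.factorial := by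
  have hbound := ((isBigO_hyp2F1_coeff a₁ a₂ b₁).mul (isBigO_poch_div_poch a₃ b₂)).trans
    (isBigO_rpow_mul_rpow _ _)
  refine (summable_of_isBigO_nat (summable_nat_rpow.2 (by linarith)) hbound).congr fun k => ?_
  rw [one_pow]
  ring

end Hypergeometric

section EulerIntegral

lemma hasSum_mul_integral_of_nonneg {ι α : Type*} [Countable ι] [MeasurableSpace α]
    {μ : Measure α} {c : ι → ℝ} {g : ι → α → ℝ} {f : α → ℝ} (hg_nonneg : ∀ i, 0 ≤ᵐ[μ] g i)
    (hg : ∀ i, Integrable (g i) μ) (hf : ∀ᵐ x ∂μ, HasSum (fun i => c i * g i x) (f x))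
    (hc : Summable fun i => c i * ∫ x, g i x ∂μ) :
    HasSum (fun i => c i * ∫ x, g i x ∂μ) (∫ x, f x ∂μ) := by
  have hnorm (i : ι) : ∫ x, ‖c i * g i x‖ ∂μ = |c i * ∫ x, g i x ∂μ| := by
    rw [abs_mul, abs_of_nonneg (integral_nonneg_of_ae (hg_nonneg i)), ← integral_const_mul]
    refine integral_congr_ae ?_
    filter_upwards [hg_nonneg i] with x hx
    rw [norm_mul, norm_eq_abs, norm_of_nonneg hx]
  have hsum := hasSum_integral_of_summable_integral_norm (fun i => (hg i).const_mul (c i))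
    (by simpa only [hnorm] using hc.abs)
  rw [integral_congr_ae (hf.mono fun x hx => hx.tsum_eq)] at hsum
  simpa only [integral_const_mul] using hsum

lemma ofReal_rpow_mul_one_sub_rpow (u v : ℝ) {x : ℝ} (hx : x ∈ Icc (0 : ℝ) 1) :
    ((x ^ (u - 1) * (1 - x) ^ (v - 1) : ℝ) : ℂ) =
      (x : ℂ) ^ ((u : ℂ) - 1) * (1 - (x : ℂ)) ^ ((v : ℂ) - 1) := by
  rw [Complex.ofReal_mul, Complex.ofReal_cpow hx.1, Complex.ofReal_cpow (sub_nonneg.2 hx.2)]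
  push_cast
  rfl

variable {u v : ℝ}

lemma intervalIntegrable_rpow_mul_one_sub_rpow (hu : 0 < u) (hv : 0 < v) :
    IntervalIntegrable (fun x : ℝ => x ^ (u - 1) * (1 - x) ^ (v - 1)) volume 0 1 := by
  have hbeta := Complex.betaIntegral_convergent (u := u) (v := v) (by simpa) (by simpa)
  rw [intervalIntegrable_iff_integrableOn_Icc_of_le zero_le_one] at hbeta ⊢
  refine IntegrableOn.congr_fun hbeta.re (fun x hx => ?_) measurableSet_Icc
  rw [← ofReal_rpow_mul_one_sub_rpow u v hx]
  exact Complex.ofReal_re _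

lemma integral_rpow_mul_one_sub_rpow (hu : 0 < u) (hv : 0 < v) :
    ∫ x in (0 : ℝ)..1, x ^ (u - 1) * (1 - x) ^ (v - 1) = beta u v := by
  have hbeta : Complex.betaIntegral u v =
      ((∫ x in (0 : ℝ)..1, x ^ (u - 1) * (1 - x) ^ (v - 1) : ℝ) : ℂ) := by
    rw [← intervalIntegral.integral_ofReal]
    refine intervalIntegral.integral_congr fun x hx => ?_
    rw [uIcc_of_le zero_le_one] at hx
    exact (ofReal_rpow_mul_one_sub_rpow u v hx).symm
  rw [beta_eq_betaIntegralReal u v hu hv, hbeta, Complex.ofReal_re]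

theorem hasSum_integral_rpow_mul_one_sub_rpow_mul (hu : 0 < u) (hv : 0 < v)
    {c : ℕ → ℝ} {f : ℝ → ℝ} (hf : ∀ x ∈ Ioo (0 : ℝ) 1, HasSum (fun k => c k * x ^ k) (f x))
    (hc : Summable fun k : ℕ => c k * beta (u + k) v) :
    HasSum (fun k : ℕ => c k * beta (u + k) v)
      (∫ x in (0 : ℝ)..1, x ^ (u - 1) * (1 - x) ^ (v - 1) * f x) := by
  let g (k : ℕ) (x : ℝ) : ℝ := x ^ (u + k - 1) * (1 - x) ^ (v - 1)
  have hu_add (k : ℕ) : 0 < u + k := by positivity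
  have hg_integrable (k : ℕ) : IntegrableOn (g k) (Ioo 0 1) :=
    (intervalIntegrable_iff_integrableOn_Ioo_of_le zero_le_one).1
      (intervalIntegrable_rpow_mul_one_sub_rpow (hu_add k) hv)
  have hg_integral (k : ℕ) : ∫ x in Ioo (0 : ℝ) 1, g k x = beta (u + k) v := by
    rw [← integral_rpow_mul_one_sub_rpow (hu_add k) hv,
      intervalIntegral.integral_of_le zero_le_one, integral_Ioc_eq_integral_Ioo]
  have hg_nonneg (k : ℕ) : 0 ≤ᵐ[volume.restrict (Ioo 0 1)] g k :=
    ae_restrict_of_forall_mem measurableSet_Ioo fun x hx =>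
      mul_nonneg (rpow_nonneg hx.1.le _) (rpow_nonneg (sub_nonneg.2 hx.2.le) _)
  have hg_sum : ∀ᵐ x ∂volume.restrict (Ioo (0 : ℝ) 1),
      HasSum (fun k => c k * g k x) (x ^ (u - 1) * (1 - x) ^ (v - 1) * f x) := by
    refine ae_restrict_of_forall_mem measurableSet_Ioo fun x hx => ?_
    refine ((hf x hx).mul_left _).congr_fun fun k => ?_
    simp only [g]
    rw [add_sub_right_comm, rpow_add hx.1, rpow_natCast]
    ring
  rw [intervalIntegral.integral_of_le zero_le_one, integral_Ioc_eq_integral_Ioo]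
  simp only [← hg_integral] at hc ⊢
  exact hasSum_mul_integral_of_nonneg hg_nonneg hg_integrable hg_sum hc

theorem euler_integral_hyp2F1 (hu : 0 < u) (hv : 0 < v) (a : ℝ) {z : ℝ}
    (hz : |z| < 1) :
    ∫ y in (0 : ℝ)..1, y ^ (u - 1) * (1 - y) ^ (v - 1) * (1 - z * y) ^ (-a) =
      beta u v * hyp2F1 a u (u + v) z := by
  have hterm (k : ℕ) : poch a k / k.factorial * z ^ k * beta (u + k) v =
      beta u v * (poch a k * poch u k / poch (u + v) k * z ^ k / k.factorial) := by
    rw [beta_add_natCast (ne_neg_natCast_of_pos hu) (ne_neg_natCast_of_pos (add_pos hu hv))]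
    ring
  have hseries : ∀ y ∈ Ioo (0 : ℝ) 1,
      HasSum (fun k : ℕ => poch a k / k.factorial * z ^ k * y ^ k) ((1 - z * y) ^ (-a)) := by
    intro y hy
    have hzy : |z * y| < 1 := by
      rw [abs_mul, abs_of_pos hy.1]
      exact mul_lt_one_of_nonneg_of_lt_one_left (abs_nonneg z) hz hy.2.le
    simpa only [mul_pow, mul_assoc] using hasSum_one_sub_rpow_neg a hzy
  have hsum := hasSum_integral_rpow_mul_one_sub_rpow_mul hu hv hseries
    (by simpa only [hterm] using (summable_hyp2F1 a u (u + v) hz).mul_left (beta u v))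
  simp only [hterm] at hsum
  rw [← hsum.tsum_eq, tsum_mul_left, hyp2F1]

theorem euler_integral_hyp3F2_one (hu : 0 < u) (hv : 0 < v) {a b c : ℝ}
    (h : a + b < c + v) :
    ∫ x in (0 : ℝ)..1, x ^ (u - 1) * (1 - x) ^ (v - 1) * hyp2F1 a b c x =
      beta u v * hyp3F2 a u b (u + v) c 1 := by
  have hterm (k : ℕ) : poch a k * poch b k / poch c k / k.factorial * beta (u + k) v =
      beta u v * (poch a k * poch u k * poch b k / (poch (u + v) k * poch c k) * 1 ^ k /
        k.factorial) := by
    rw [beta_add_natCast (ne_neg_natCast_of_pos hu) (ne_neg_natCast_of_pos (add_pos hu hv)),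
      one_pow]
    ring
  have hseries : ∀ x ∈ Ioo (0 : ℝ) 1,
      HasSum (fun k : ℕ => poch a k * poch b k / poch c k / k.factorial * x ^ k)
        (hyp2F1 a b c x) := by
    intro x hx
    simpa only [hyp2F1, div_mul_eq_mul_div, div_right_comm] using
      (summable_hyp2F1 a b c (abs_lt.2 ⟨by linarith [hx.1], hx.2⟩)).hasSum
  have hsum := hasSum_integral_rpow_mul_one_sub_rpow_mul hu hv hseries
    (by simpa only [hterm] using (summable_hyp3F2_one (by linarith)).mul_left (beta u v))
  simp only [hterm] at hsum
  rw [← hsum.tsum_eq, tsum_mul_left, hyp3F2]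

end EulerIntegral

theorem double_integral_beta_weights (p q r s t : ℝ) (hp : 0 < p) (hq : 0 < q)
    (hr : 0 < r) (hs : 0 < s) (ht : t < q + s) :
    (∫ x in (0:ℝ)..1, ∫ y in (0:ℝ)..1,
      x ^ (p - 1) * (1 - x) ^ (q - 1) * y ^ (r - 1) * (1 - y) ^ (s - 1) * (1 - x * y) ^ (-t))
    = Real.Gamma p * Real.Gamma q / Real.Gamma (p + q) *
        (Real.Gamma r * Real.Gamma s / Real.Gamma (r + s)) *
        hyp3F2 t p r (p + q) (r + s) 1 := by
  change _ = beta p q * beta r s * _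
  have inner_integral : EqOn
      (fun x : ℝ => ∫ y in (0:ℝ)..1,
        x ^ (p - 1) * (1 - x) ^ (q - 1) * y ^ (r - 1) * (1 - y) ^ (s - 1) * (1 - x * y) ^ (-t))
      (fun x => beta r s * (x ^ (p - 1) * (1 - x) ^ (q - 1) * hyp2F1 t r (r + s) x))
      (Ioo 0 1) := by
    intro x hx
    have hx_abs : |x| < 1 := abs_lt.2 ⟨by linarith [hx.1], hx.2⟩
    simp only [mul_assoc, intervalIntegral.integral_const_mul]
    simp only [← mul_assoc, euler_integral_hyp2F1 hr hs t hx_abs]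
    ring
  rw [intervalIntegral.integral_congr_Ioo_of_le zero_le_one inner_integral,
    intervalIntegral.integral_const_mul, euler_integral_hyp3F2_one hp hq (by linarith)]
  ring
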